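/- Suppose the LP relaxation of maximum weight matching on G is pointed, i.e. it has a unique half-integral optimum x* whose weight exceeds that of every other half-integral feasible point by some ε > 0. Let (α, m, γ) be a fixed point of the natural dynamics. Then no non-solid edge (edge with x*_e = 0) is a dotted edge: every edge (i,j) with x*_{ij} = 0 satisfies w_{ij} − α_{i→j} − α_{j→i} < 0. -/

import Mathlib

open Finset Filter Topology

/-- The offer `m_{i→j}` computed from message vector `α`:
`m_{i→j} = (w_{ij} − α_{i→j})₊ − (1/2)(w_{ij} − α_{i→j} − α_{j→i})₊`. -/
noncomputable def offer {V : Type*} (w α : V → V → ℝ) (i j : V) : ℝ :=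
  max (w i j - α i j) 0 - (1 / 2) * max (w i j - α i j - α j i) 0

/-- `max_{k ∈ ∂i ∖ {j}} m_{k→i}` (max over the empty set is 0). -/
noncomputable def bestAlt {V : Type*} [Fintype V] [DecidableEq V]
    (Adj : V → V → Prop) [DecidableRel Adj] (w α : V → V → ℝ) (i j : V) : ℝ :=
  (Finset.univ.filter fun k => Adj i k ∧ k ≠ j).fold max 0 fun k => offer w α k i

/-- Earnings `γ_i = max_{k ∈ ∂i} m_{k→i}` (max over the empty set is 0). -/
noncomputable def earn {V : Type*} [Fintype V]
    (Adj : V → V → Prop) [DecidableRel Adj] (w α : V → V → ℝ) (i : V) : ℝ :=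
  (Finset.univ.filter fun k => Adj i k).fold max 0 fun k => offer w α k i

/-- One step of the natural dynamics with damping factor `κ`:
`α'_{i→j} = κ · max_{k∈∂i∖{j}} m_{k→i} + (1−κ) · α_{i→j}`. -/
noncomputable def step {V : Type*} [Fintype V] [DecidableEq V]
    (Adj : V → V → Prop) [DecidableRel Adj] (w : V → V → ℝ) (κ : ℝ)
    (α : V → V → ℝ) : V → V → ℝ :=
  fun i j => κ * bestAlt Adj w α i j + (1 - κ) * α i j

/-- A fixed point of the natural dynamics: the message vector is unchanged by the update. -/
def IsFixedPoint {V : Type*} [Fintype V] [DecidableEq V]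
    (Adj : V → V → Prop) [DecidableRel Adj] (w : V → V → ℝ) (κ : ℝ)
    (α : V → V → ℝ) : Prop :=
  ∀ i j, Adj i j → step Adj w κ α i j = α i j

/-- `W`, the maximum edge weight. -/
noncomputable def maxW {V : Type*} [Fintype V]
    (Adj : V → V → Prop) [DecidableRel Adj] (w : V → V → ℝ) : ℝ :=
  ((Finset.univ ×ˢ Finset.univ).filter fun p : V × V => Adj p.1 p.2).fold max 0
    fun p => w p.1 p.2

/-- A valid message vector: `α ∈ [0, W]^{2|E|}`. -/
def ValidMsg {V : Type*} [Fintype V]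
    (Adj : V → V → Prop) [DecidableRel Adj] (w : V → V → ℝ) (α : V → V → ℝ) : Prop :=
  ∀ i j, Adj i j → α i j ∈ Set.Icc (0 : ℝ) (maxW Adj w)

/-- `G = (V, E)` is a finite simple graph with symmetric positive edge weights. -/
def GoodGraph {V : Type*} (Adj : V → V → Prop) (w : V → V → ℝ) : Prop :=
  (∀ i j, Adj i j → Adj j i) ∧ (∀ i, ¬Adj i i) ∧ (∀ i j, w i j = w j i) ∧
  (∀ i j, Adj i j → 0 < w i j)

/-- Feasibility for the LP relaxation of maximum weight matching:
`x` symmetric, `x_{ij} ≥ 0` on edges, and `∑_{j∈∂i} x_{ij} ≤ 1` at every node. -/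
def LPFeasible {V : Type*} [Fintype V]
    (Adj : V → V → Prop) [DecidableRel Adj] (x : V → V → ℝ) : Prop :=
  (∀ i j, x i j = x j i) ∧ (∀ i j, Adj i j → 0 ≤ x i j) ∧
  (∀ i, ∑ j ∈ Finset.univ.filter (fun j => Adj i j), x i j ≤ 1)

/-- The LP objective `∑_{(i,j)∈E} w_{ij} x_{ij}` (each undirected edge counted once,
i.e. half the sum over ordered pairs). -/
noncomputable def LPobj {V : Type*} [Fintype V]
    (Adj : V → V → Prop) [DecidableRel Adj] (w x : V → V → ℝ) : ℝ :=
  (1 / 2) * ∑ p ∈ (Finset.univ ×ˢ Finset.univ).filter (fun p : V × V => Adj p.1 p.2),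
    w p.1 p.2 * x p.1 p.2

/-!
A cover of least total weight is tight along a permutation `σ` of the vertices: if Hall's condition
failed, raising the cover on the tight neighbors of a violating set and lowering it on that set
would decrease the total. Apply this to weights boosted slightly on the edges where `x*` vanishes.
By the gap, the half-integral point of `σ` must be `x*`, so the cover `y` is a dual optimum which
is moreover strictly complementary to `x*`.

At a fixed point `γ i + γ j = max (w i j) (α i j + α j i)`. Hence `γ` is also a cover, and the
dotted edges are exactly its tight edges. If a dotted edge had `x* = 0`, choose such an edge with an
endpoint `i` maximizing `y i - γ i`, which is then positive. Following `σ` from `i`, the sign of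
`y - γ` alternates, so `i` lies on an even cycle of `σ`. Taking the arcs of this cycle alternately
gives two half-integral points whose average is `x*`, contradicting the gap.
-/

section Cover

variable {V : Type*} {W : V → V → ℝ} {y : V → ℝ}

/-- A cover of the weight matrix `W`: a feasible point of the linear program dual to fractional
matching. Diagonal entries are included, so `W i i / 2` bounds `y i` from below. -/
def IsCover (W : V → V → ℝ) (y : V → ℝ) : Prop :=
  ∀ i j, W i j ≤ y i + y j

theorem isCover_sum_abs [Fintype V] (W : V → V → ℝ) : IsCover W fun i => ∑ j, |W i j| := by
  intro i j
  have habs : |W i j| ≤ ∑ k, |W i k| :=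
    single_le_sum (f := fun k => |W i k|) (fun _ _ => abs_nonneg _) (mem_univ j)
  have hnonneg : 0 ≤ ∑ k, |W j k| := sum_nonneg fun _ _ => abs_nonneg _
  linarith [le_abs_self (W i j)]

theorem isClosed_setOf_isCover (W : V → V → ℝ) : IsClosed {y | IsCover W y} := by
  simp only [IsCover, Set.ofPred_forall]
  exact isClosed_iInter fun i => isClosed_iInter fun j => isClosed_le (by fun_prop) (by fun_prop)

theorem IsCover.mem_Icc_of_sum_le [Fintype V] (hy : IsCover W y) {C : ℝ} (hC : ∑ i, y i ≤ C) :
    y ∈ Set.Icc (fun i => W i i / 2) (fun i => W i i / 2 + (C - ∑ k, W k k / 2)) := by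
  have hdiag : ∀ i, W i i / 2 ≤ y i := fun i => by linarith [hy i i]
  refine ⟨hdiag, fun i => ?_⟩
  have hsingle : y i - W i i / 2 ≤ ∑ k, (y k - W k k / 2) :=
    single_le_sum (f := fun k => y k - W k k / 2) (fun k _ => sub_nonneg.2 (hdiag k)) (mem_univ i)
  rw [sum_sub_distrib] at hsingle
  linarith

theorem exists_isCover_isMinOn_sum [Fintype V] (W : V → V → ℝ) :
    ∃ y, IsCover W y ∧ IsMinOn (fun y => ∑ i, y i) {y | IsCover W y} y := by
  let y₀ : V → ℝ := fun i => ∑ j, |W i j|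
  refine ContinuousOn.exists_isMinOn' (f := fun y : V → ℝ => ∑ i, y i) (by fun_prop)
    (isClosed_setOf_isCover W) (isCover_sum_abs W) ?_
  filter_upwards [mem_inf_of_left (isCompact_Icc (a := fun i => W i i / 2)
      (b := fun i => W i i / 2 + (∑ i, y₀ i - ∑ k, W k k / 2))).compl_mem_cocompact,
    mem_inf_of_right (mem_principal_self _)] with y hout hy
  by_contra hlt
  exact hout (IsCover.mem_Icc_of_sum_le hy (not_le.1 hlt).le)

theorem IsCover.exists_pos_add_le_of_ne [Finite V] (hy : IsCover W y) :
    ∃ η > 0, ∀ i j, y i + y j ≠ W i j → W i j + η ≤ y i + y j := by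
  obtain ⟨η, hη, hslack⟩ := Pi.exists_forall_pos_add_lt
    (x := fun p : {p : V × V // W p.1 p.2 < y p.1 + y p.2} => W p.1.1 p.1.2)
    (y := fun p => y p.1.1 + y p.1.2) fun p => p.2
  exact ⟨η, hη, fun i j hne => (hslack ⟨(i, j), (hy i j).lt_of_ne' hne⟩).le⟩

theorem IsCover.exists_shift [Finite V] [DecidableEq V] (hsymm : ∀ i j, W i j = W j i)
    (hy : IsCover W y) {S N : Finset V} (hN : ∀ i ∈ S, ∀ j, y i + y j = W i j → j ∈ N) :
    ∃ η > 0, IsCover W fun i =>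
      y i + η * ((if i ∈ N then 1 else 0) - (if i ∈ S then 1 else 0)) := by
  obtain ⟨η, hη, hslack⟩ := hy.exists_pos_add_le_of_ne
  have hcross : ∀ i ∈ S, ∀ j ∉ N, W i j + η ≤ y i + y j :=
    fun i hi j hj => hslack i j fun htight => hj (hN i hi j htight)
  let d : V → ℝ := fun i => (if i ∈ N then 1 else 0) - (if i ∈ S then 1 else 0)
  refine ⟨η / 2, half_pos hη, fun i j => ?_⟩
  change W i j ≤ (y i + η / 2 * d i) + (y j + η / 2 * d j)
  by_cases hslack : W i j + η ≤ y i + y j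
  · have hd : ∀ k, -1 ≤ d k := fun k => by
      simp only [d]
      split_ifs <;> norm_num
    linarith [mul_le_mul_of_nonneg_left (hd i) hη.le, mul_le_mul_of_nonneg_left (hd j) hη.le]
  · have hij : i ∈ S → j ∈ N := fun hi => by_contra fun hj => hslack (hcross i hi j hj)
    have hji : j ∈ S → i ∈ N := fun hj => by_contra fun hi => hslack <| by
      rw [hsymm, add_comm (y i)]
      exact hcross j hj i hi
    have hd : 0 ≤ d i + d j := by
      simp only [d]
      split_ifs <;> first | tauto | norm_num
    linarith [hy i j, mul_nonneg hη.le hd]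

/-- The vertices `j` for which the cover constraint at `(i, j)` holds with equality. -/
noncomputable def tightNeighbors [Fintype V] (W : V → V → ℝ) (y : V → ℝ) (i : V) : Finset V :=
  univ.filter fun j => y i + y j = W i j

theorem card_le_card_biUnion_tightNeighbors [Fintype V] [DecidableEq V]
    (hsymm : ∀ i j, W i j = W j i) (hy : IsCover W y)
    (hmin : IsMinOn (fun y => ∑ i, y i) {y | IsCover W y} y) (S : Finset V) :
    #S ≤ #(S.biUnion (tightNeighbors W y)) := by
  set N := S.biUnion (tightNeighbors W y)
  obtain ⟨η, hη, hshift⟩ := hy.exists_shift hsymm (S := S) (N := N) fun i hi j htight =>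
    mem_biUnion.2 ⟨i, hi, mem_filter.2 ⟨mem_univ j, htight⟩⟩
  have hsum := hmin hshift
  simp only [Set.mem_ofPred_eq, sum_add_distrib, ← mul_sum, sum_sub_distrib, sum_boole,
    filter_univ_mem] at hsum
  have hcard : (0 : ℝ) ≤ #N - #S := nonneg_of_mul_nonneg_right (by linarith) hη
  exact_mod_cast sub_nonneg.1 hcard

theorem exists_isCover_perm_tight [Finite V] (hsymm : ∀ i j, W i j = W j i) :
    ∃ y, IsCover W y ∧ ∃ σ : Equiv.Perm V, ∀ i, y i + y (σ i) = W i (σ i) := by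
  classical
  cases nonempty_fintype V
  obtain ⟨y, hy, hmin⟩ := exists_isCover_isMinOn_sum W
  obtain ⟨f, hinj, hf⟩ := (all_card_le_biUnion_card_iff_exists_injective _).1
    (card_le_card_biUnion_tightNeighbors hsymm hy hmin)
  exact ⟨y, hy, Equiv.ofBijective f (Finite.injective_iff_bijective.1 hinj),
    fun i => (mem_filter.1 (hf i)).2⟩

end Cover

section LinearProgram

variable {V : Type*} {Adj : V → V → Prop} [DecidableRel Adj] {w x : V → V → ℝ}

/-- The weight matrix of the graph, extended by `0` to non-edges; the diagonal then forces covers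
to be nonnegative. -/
noncomputable def edgeWeight (Adj : V → V → Prop) [DecidableRel Adj] (w : V → V → ℝ)
    (i j : V) : ℝ :=
  if Adj i j then w i j else 0

theorem edgeWeight_of_adj {i j : V} (h : Adj i j) : edgeWeight Adj w i j = w i j :=
  if_pos h

theorem edgeWeight_of_not_adj {i j : V} (h : ¬Adj i j) : edgeWeight Adj w i j = 0 :=
  if_neg h

theorem edgeWeight_symm (hadj : ∀ i j, Adj i j → Adj j i) (hw : ∀ i j, w i j = w j i) (i j : V) :
    edgeWeight Adj w i j = edgeWeight Adj w j i := by
  simp only [edgeWeight, hw i j, (⟨hadj i j, hadj j i⟩ : Adj i j ↔ Adj j i)]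

theorem IsCover.le_of_adj {y : V → ℝ} (hy : IsCover (edgeWeight Adj w) y) {i j : V}
    (h : Adj i j) : w i j ≤ y i + y j :=
  (edgeWeight_of_adj h).symm.trans_le (hy i j)

theorem IsCover.nonneg (hirr : ∀ i, ¬Adj i i) {y : V → ℝ} (hy : IsCover (edgeWeight Adj w) y)
    (i : V) : 0 ≤ y i := by
  have hdiag := hy i i
  rw [edgeWeight_of_not_adj (hirr i)] at hdiag
  linarith

/-- Every edge value of `x` is `0`, `1/2` or `1`. -/
def IsHalfIntegral (Adj : V → V → Prop) (x : V → V → ℝ) : Prop :=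
  ∀ i j, Adj i j → x i j = 0 ∨ x i j = 1 / 2 ∨ x i j = 1

/-- The weight of `x` exceeds by at least `ε` that of every half-integral feasible point which
differs from `x` on some edge: the gap condition in the definition of a pointed relaxation. -/
def HasGap [Fintype V] (Adj : V → V → Prop) [DecidableRel Adj] (w x : V → V → ℝ) (ε : ℝ) : Prop :=
  ∀ z, LPFeasible Adj z → IsHalfIntegral Adj z → (∃ i j, Adj i j ∧ z i j ≠ x i j) →
    LPobj Adj w z + ε ≤ LPobj Adj w x

variable [Fintype V]

theorem LPobj_eq_sum_sum (Adj : V → V → Prop) [DecidableRel Adj] (w x : V → V → ℝ) :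
    LPobj Adj w x = (1 / 2) * ∑ i, ∑ j with Adj i j, w i j * x i j := by
  simp only [LPobj, sum_filter, sum_product]

theorem LPobj_congr {z : V → V → ℝ} (h : ∀ i j, Adj i j → x i j = z i j) :
    LPobj Adj w x = LPobj Adj w z := by
  simp only [LPobj_eq_sum_sum]
  congr 1
  exact sum_congr rfl fun i _ => sum_congr rfl fun j hj => by rw [h i j (mem_filter.1 hj).2]

theorem LPFeasible.obj_le_sum (hadj : ∀ i j, Adj i j → Adj j i) (hx : LPFeasible Adj x)
    {y : V → ℝ} (hy₀ : ∀ i, 0 ≤ y i) (hy : ∀ i j, Adj i j → w i j ≤ y i + y j) :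
    LPobj Adj w x ≤ ∑ i, y i := by
  obtain ⟨hxsymm, hxnonneg, hxsum⟩ := hx
  have hswap : ∑ i, ∑ j with Adj i j, y j * x i j = ∑ i, ∑ j with Adj i j, y i * x i j := by
    rw [sum_comm' (t' := univ) (s' := fun j => {i | Adj j i}) fun i j => by
      simpa using ⟨hadj i j, hadj j i⟩]
    simp only [hxsymm]
  have hrow : ∑ i, ∑ j with Adj i j, y i * x i j ≤ ∑ i, y i := sum_le_sum fun i _ => by
    rw [← mul_sum]
    exact mul_le_of_le_one_right (hy₀ i) (hxsum i)
  have hedge : ∑ i, ∑ j with Adj i j, w i j * x i j ≤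
      ∑ i, ∑ j with Adj i j, (y i * x i j + y j * x i j) :=
    sum_le_sum fun i _ => sum_le_sum fun j hj => by
      have hij := (mem_filter.1 hj).2
      rw [← add_mul]
      exact mul_le_mul_of_nonneg_right (hy i j hij) (hxnonneg i j hij)
  simp only [sum_add_distrib, hswap] at hedge
  rw [LPobj_eq_sum_sum]
  linarith

end LinearProgram

section ArcPoint

variable {V : Type*} {σ : Equiv.Perm V} {c : V → ℝ}

/-- Arc masses in `{0, 1, 2}` that sum to `2` over the two arcs at each vertex, so that halving
them gives a half-integral fractional perfect matching. A cycle of `σ` either has mass `1`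
on every arc or alternates between `0` and `2`. -/
structure IsBalanced (σ : Equiv.Perm V) (c : V → ℝ) : Prop where
  mem : ∀ i, c i = 0 ∨ c i = 1 ∨ c i = 2
  add_apply : ∀ i, c i + c (σ i) = 2

theorem isBalanced_one (σ : Equiv.Perm V) : IsBalanced σ 1 :=
  ⟨fun _ => Or.inr (Or.inl rfl), fun _ => one_add_one_eq_two⟩

theorem IsBalanced.two_sub (hc : IsBalanced σ c) : IsBalanced σ fun i => 2 - c i :=
  ⟨fun i => by rcases hc.mem i with h | h | h <;> norm_num [h],
    fun i => by linarith [hc.add_apply i]⟩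

theorem exists_isBalanced_eq_two [Finite V] {P : V → Prop} (hsq : ∀ i, P i → P (σ (σ i)))
    (hdisj : ∀ i, P i → ¬P (σ i)) : ∃ c, IsBalanced σ c ∧ ∀ i, P i → c i = 2 := by
  classical
  have hinj : Function.Injective fun i => σ (σ i) := σ.injective.comp σ.injective
  have hsurj : Set.SurjOn (fun i => σ (σ i)) {i | P i} {i | P i} :=
    (((Set.toFinite _).injOn_iff_bijOn_of_mapsTo hsq).1 hinj.injOn).surjOn
  have hsq_iff : ∀ i, P (σ (σ i)) ↔ P i := by
    refine fun i => ⟨fun h => ?_, hsq i⟩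
    obtain ⟨k, hk, heq⟩ := hsurj h
    exact hinj heq ▸ hk
  refine ⟨fun i => if P i then 2 else if P (σ i) then 0 else 1,
    ⟨fun i => by split_ifs <;> simp, fun i => ?_⟩, fun i hi => if_pos hi⟩
  have hexcl := hdisj i
  simp only [hsq_iff]
  split_ifs <;> first | tauto | norm_num

variable [DecidableEq V]

/-- The point of the linear program in which each arc `i → σ i` contributes `c i / 2` to the
undirected edge `{i, σ i}`; a two-cycle of `σ` thus receives the contributions of both its arcs. -/
noncomputable def arcPoint (σ : Equiv.Perm V) (c : V → ℝ) (i j : V) : ℝ :=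
  ((if σ i = j then c i else 0) + (if σ j = i then c j else 0)) / 2

theorem arcPoint_symm (σ : Equiv.Perm V) (c : V → ℝ) (i j : V) :
    arcPoint σ c i j = arcPoint σ c j i := by
  rw [arcPoint, arcPoint, add_comm]

theorem apply_eq_or_apply_eq_of_arcPoint_ne_zero {i j : V} (h : arcPoint σ c i j ≠ 0) :
    σ i = j ∨ σ j = i := by
  contrapose! h
  simp [arcPoint, h.1, h.2]

theorem apply_ne_zero_of_eq_arcPoint {Adj : V → V → Prop} {x : V → V → ℝ}
    (hx : ∀ i j, Adj i j → x i j = arcPoint σ 1 i j) {i : V} (hi : Adj i (σ i)) :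
    x i (σ i) ≠ 0 := by
  rw [hx i _ hi, arcPoint, if_pos rfl, Pi.one_apply]
  split_ifs <;> norm_num

theorem arcPoint_apply_of_ne {i : V} (h : σ (σ i) ≠ i) : arcPoint σ c i (σ i) = c i / 2 := by
  simp [arcPoint, h]

theorem sum_arcPoint [Fintype V] (σ : Equiv.Perm V) (c : V → ℝ) (i : V) :
    ∑ j, arcPoint σ c i j = (c i + c (σ.symm i)) / 2 := by
  have hσ : ∀ j, σ j = i ↔ j = σ.symm i := fun j => (Equiv.eq_symm_apply σ).symm
  simp [arcPoint, ← sum_div, sum_add_distrib, hσ]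

theorem IsBalanced.isHalfIntegral (hc : IsBalanced σ c) (Adj : V → V → Prop) :
    IsHalfIntegral Adj (arcPoint σ c) := by
  intro i j _
  by_cases hij : σ i = j
  · subst hij
    have hadd := hc.add_apply i
    by_cases hji : σ (σ i) = i
    · simp [arcPoint, hji, hadd]
    · rw [arcPoint_apply_of_ne hji]
      rcases hc.mem i with h | h | h <;> simp [h]
  · rcases hc.mem j with h | h | h <;> by_cases hji : σ j = i <;> simp [arcPoint, hij, hji, h]

theorem IsBalanced.lpFeasible [Fintype V] (hc : IsBalanced σ c) (Adj : V → V → Prop)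
    [DecidableRel Adj] : LPFeasible Adj (arcPoint σ c) := by
  have hc₀ : ∀ i, 0 ≤ c i := fun i => by rcases hc.mem i with h | h | h <;> norm_num [h]
  have hnonneg : ∀ i j, 0 ≤ arcPoint σ c i j := fun i j => by
    have hi := hc₀ i
    have hj := hc₀ j
    rw [arcPoint]
    positivity
  refine ⟨arcPoint_symm σ c, fun i j _ => hnonneg i j, fun i => ?_⟩
  calc ∑ j with Adj i j, arcPoint σ c i j ≤ ∑ j, arcPoint σ c i j :=
        sum_le_univ_sum_of_nonneg (hnonneg i)
    _ = (c i + c (σ.symm i)) / 2 := sum_arcPoint σ c i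
    _ = 1 := by
        have hadd := hc.add_apply (σ.symm i)
        rw [Equiv.apply_symm_apply] at hadd
        linarith

variable [Fintype V] {Adj : V → V → Prop} [DecidableRel Adj] {w x : V → V → ℝ}

theorem LPobj_arcPoint (hadj : ∀ i j, Adj i j → Adj j i) (hw : ∀ i j, w i j = w j i)
    (σ : Equiv.Perm V) (c : V → ℝ) :
    LPobj Adj w (arcPoint σ c) = (1 / 2) * ∑ i, edgeWeight Adj w i (σ i) * c i := by
  have hforward : ∑ i, ∑ j, edgeWeight Adj w i j * (if σ i = j then c i else 0) =
      ∑ i, edgeWeight Adj w i (σ i) * c i := by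
    simp
  have hbackward : ∑ i, ∑ j, edgeWeight Adj w i j * (if σ j = i then c j else 0) =
      ∑ i, edgeWeight Adj w i (σ i) * c i := by
    rw [sum_comm, ← hforward]
    simp only [edgeWeight_symm hadj hw]
  have hsplit : ∀ i j, (if Adj i j then w i j * arcPoint σ c i j else 0) =
      (edgeWeight Adj w i j * (if σ i = j then c i else 0) +
        edgeWeight Adj w i j * (if σ j = i then c j else 0)) / 2 := fun i j => by
    simp only [edgeWeight, arcPoint]
    split_ifs <;> ring
  simp only [LPobj_eq_sum_sum, sum_filter, hsplit, ← sum_div, sum_add_distrib, hforward,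
    hbackward]
  ring

theorem LPobj_arcPoint_add_two_sub (hadj : ∀ i j, Adj i j → Adj j i)
    (hw : ∀ i j, w i j = w j i) (σ : Equiv.Perm V) (c : V → ℝ) :
    LPobj Adj w (arcPoint σ c) + LPobj Adj w (arcPoint σ fun i => 2 - c i) =
      2 * LPobj Adj w (arcPoint σ 1) := by
  simp only [LPobj_arcPoint hadj hw, ← mul_add, ← sum_add_distrib, add_sub_cancel, ← sum_mul,
    Pi.one_apply]
  ring

theorem HasGap.isBalanced_eq_one (hadj : ∀ i j, Adj i j → Adj j i) (hw : ∀ i j, w i j = w j i)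
    {ε : ℝ} (hε : 0 < ε) (hgap : HasGap Adj w x ε)
    (hx : ∀ i j, Adj i j → x i j = arcPoint σ 1 i j) (hc : IsBalanced σ c) {i : V}
    (hi : Adj i (σ i)) (hne : σ (σ i) ≠ i) : c i = 1 := by
  by_contra hci
  have hdiff : ∀ d : V → ℝ, d i ≠ 1 → ∃ k l, Adj k l ∧ arcPoint σ d k l ≠ x k l := fun d hd =>
    ⟨i, σ i, hi, by
      rw [hx i _ hi, arcPoint_apply_of_ne hne, arcPoint_apply_of_ne hne]
      exact fun h => hd ((div_left_inj' two_ne_zero).1 h)⟩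
  have hlt := hgap _ (hc.lpFeasible Adj) (hc.isHalfIntegral Adj) (hdiff c hci)
  have hlt' := hgap _ (hc.two_sub.lpFeasible Adj) (hc.two_sub.isHalfIntegral Adj)
    (hdiff _ fun h => hci (by linarith))
  have havg := LPobj_arcPoint_add_two_sub hadj hw σ c
  rw [← LPobj_congr hx] at havg
  linarith

end ArcPoint

section StrictDual

variable {V : Type*} {w x : V → V → ℝ}

/-- The weights `w`, increased by `η` where `x` vanishes. -/
noncomputable def boostedWeight (w x : V → V → ℝ) (η : ℝ) (i j : V) : ℝ :=
  w i j + if x i j = 0 then η else 0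

theorem boostedWeight_symm (hw : ∀ i j, w i j = w j i) (hx : ∀ i j, x i j = x j i) (η : ℝ)
    (i j : V) : boostedWeight w x η i j = boostedWeight w x η j i := by
  rw [boostedWeight, boostedWeight, hw, hx]

variable [DecidableEq V] {Adj : V → V → Prop} [DecidableRel Adj]

/-- A strictly complementary primal-dual pair for the matching relaxation: on the edges `x` is the
half-integral point of `σ`, and the dual solution `y` leaves slack on the edges where `x`
vanishes. -/
structure IsStrictDual (Adj : V → V → Prop) [DecidableRel Adj] (w x : V → V → ℝ)
    (σ : Equiv.Perm V) (y : V → ℝ) : Prop where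
  eq_arcPoint : ∀ i j, Adj i j → x i j = arcPoint σ 1 i j
  nonneg : ∀ i, 0 ≤ y i
  le_add : ∀ i j, Adj i j → w i j ≤ y i + y j
  lt_add : ∀ i j, Adj i j → x i j = 0 → w i j < y i + y j
  add_apply : ∀ i, y i + y (σ i) = edgeWeight Adj w i (σ i)

theorem sum_eq_LPobj_arcPoint_one [Fintype V] (hadj : ∀ i j, Adj i j → Adj j i)
    (hw : ∀ i j, w i j = w j i) {σ : Equiv.Perm V} {y : V → ℝ}
    (htight : ∀ i, y i + y (σ i) = edgeWeight Adj w i (σ i)) :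
    ∑ i, y i = LPobj Adj w (arcPoint σ 1) := by
  simp only [LPobj_arcPoint hadj hw, Pi.one_apply, mul_one, ← htight, sum_add_distrib,
    Equiv.sum_comp σ y]
  ring

theorem LPobj_boostedWeight_arcPoint_le [Fintype V] (hadj : ∀ i j, Adj i j → Adj j i)
    (hw : ∀ i j, w i j = w j i) (hx : ∀ i j, x i j = x j i) {η : ℝ} (hη : 0 ≤ η)
    (σ : Equiv.Perm V) :
    LPobj Adj (boostedWeight w x η) (arcPoint σ 1) ≤
      LPobj Adj w (arcPoint σ 1) + Fintype.card V * η := by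
  have hboost := boostedWeight_symm hw hx η
  have hle : ∑ i, edgeWeight Adj (boostedWeight w x η) i (σ i) ≤
      ∑ i, (edgeWeight Adj w i (σ i) + η) := sum_le_sum fun i _ => by
    simp only [edgeWeight, boostedWeight]
    split_ifs <;> linarith
  have hcard : 0 ≤ Fintype.card V * η := by positivity
  simp only [sum_add_distrib, sum_const, card_univ, nsmul_eq_mul] at hle
  simp only [LPobj_arcPoint hadj hboost, LPobj_arcPoint hadj hw, Pi.one_apply, mul_one]
  linarith

theorem HasGap.exists_isStrictDual [Fintype V] (hadj : ∀ i j, Adj i j → Adj j i)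
    (hirr : ∀ i, ¬Adj i i) (hw : ∀ i j, w i j = w j i) (hx : LPFeasible Adj x) {ε : ℝ}
    (hε : 0 < ε) (hgap : HasGap Adj w x ε) : ∃ σ y, IsStrictDual Adj w x σ y := by
  obtain ⟨η, hη, hηε⟩ := exists_pos_mul_lt hε (Fintype.card V)
  have hboost := boostedWeight_symm hw hx.1 η
  obtain ⟨y, hy, σ, htight⟩ := exists_isCover_perm_tight (edgeWeight_symm hadj hboost)
  have hle : ∀ i j, Adj i j → w i j ≤ y i + y j := fun i j hij => by
    have hij' := hy.le_of_adj hij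
    rw [boostedWeight] at hij'
    split_ifs at hij' <;> linarith
  have heq : ∀ i j, Adj i j → x i j = arcPoint σ 1 i j := by
    by_contra! hne
    obtain ⟨i, j, hij, hne⟩ := hne
    have hlt := hgap _ ((isBalanced_one σ).lpFeasible Adj) ((isBalanced_one σ).isHalfIntegral Adj)
      ⟨i, j, hij, hne.symm⟩
    have hweak := hx.obj_le_sum hadj (hy.nonneg hirr) hle
    rw [sum_eq_LPobj_arcPoint_one hadj hboost htight] at hweak
    linarith [LPobj_boostedWeight_arcPoint_le hadj hw hx.1 hη.le σ]
  refine ⟨σ, y, heq, hy.nonneg hirr, hle, fun i j hij hzero => ?_, fun i => ?_⟩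
  · have hij' := hy.le_of_adj hij
    rw [boostedWeight, if_pos hzero] at hij'
    linarith
  · rw [htight]
    by_cases hi : Adj i (σ i)
    · have hne := apply_ne_zero_of_eq_arcPoint heq hi
      rw [edgeWeight_of_adj hi, edgeWeight_of_adj hi, boostedWeight, if_neg hne, add_zero]
    · rw [edgeWeight_of_not_adj hi, edgeWeight_of_not_adj hi]

theorem IsStrictDual.adj_of_pos {σ : Equiv.Perm V} {y : V → ℝ} (hy : IsStrictDual Adj w x σ y)
    {i : V} (hi : 0 < y i) : Adj i (σ i) := by
  by_contra hnot
  have htight := hy.add_apply i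
  rw [edgeWeight_of_not_adj hnot] at htight
  linarith [hy.nonneg (σ i)]

end StrictDual

section PropagatingCover

variable {V : Type*} {Adj : V → V → Prop} {w x : V → V → ℝ} {γ y : V → ℝ} {i j : V}

/-- An edge whose cover constraint `w i j ≤ γ i + γ j` holds with equality. -/
def IsTight (Adj : V → V → Prop) (w : V → V → ℝ) (γ : V → ℝ) (i j : V) : Prop :=
  Adj i j ∧ γ i + γ j = w i j

theorem IsTight.symm (hadj : ∀ i j, Adj i j → Adj j i) (hw : ∀ i j, w i j = w j i)
    (h : IsTight Adj w γ i j) : IsTight Adj w γ j i :=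
  ⟨hadj i j h.1, by rw [add_comm, h.2, hw]⟩

/-- A dual feasible point along which tight edges propagate: if `i` has a tight edge avoiding its
neighbor `j` and `γ j > 0`, then `j` has a tight edge avoiding `i`. This is all that the argument
uses about the earnings at a fixed point. -/
structure IsPropagatingCover (Adj : V → V → Prop) (w : V → V → ℝ) (γ : V → ℝ) : Prop where
  nonneg : ∀ i, 0 ≤ γ i
  le_add : ∀ i j, Adj i j → w i j ≤ γ i + γ j
  exists_tight : ∀ i j k, Adj i j → 0 < γ j → IsTight Adj w γ i k → k ≠ j →
    ∃ l, l ≠ i ∧ IsTight Adj w γ j l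

/-- The vertices from which the alternating walk can be continued: `γ` falls short of `y` by at
least `δ`, and some edge other than the one along `σ` is tight. -/
def IsDeficient (Adj : V → V → Prop) (w : V → V → ℝ) (σ : Equiv.Perm V) (y γ : V → ℝ) (δ : ℝ)
    (i : V) : Prop :=
  δ ≤ y i - γ i ∧ ∃ j, IsTight Adj w γ i j ∧ j ≠ σ i

section AlternatingWalk

variable [DecidableEq V] [DecidableRel Adj] {σ : Equiv.Perm V}

theorem IsStrictDual.adj_and_sub_le_sub (hy : IsStrictDual Adj w x σ y)
    (hγ : IsPropagatingCover Adj w γ) (hi : γ i < y i) :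
    Adj i (σ i) ∧ y i - γ i ≤ γ (σ i) - y (σ i) := by
  have hadj := hy.adj_of_pos ((hγ.nonneg i).trans_lt hi)
  have htight := hy.add_apply i
  rw [edgeWeight_of_adj hadj] at htight
  exact ⟨hadj, by linarith [hγ.le_add i _ hadj]⟩

/-- The two steps of the alternating walk: at `σ i` the sign of `y - γ` is reversed, so `γ (σ i)`
is positive and the tight edge propagates; maximality of `δ` keeps that edge in the support of
`x`, hence on the cycle of `σ`. -/
theorem IsDeficient.apply_apply (hadj : ∀ i j, Adj i j → Adj j i) (hw : ∀ i j, w i j = w j i)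
    (hx : ∀ i j, x i j = x j i) (hy : IsStrictDual Adj w x σ y)
    (hγ : IsPropagatingCover Adj w γ) {δ : ℝ} (hδ : 0 < δ)
    (hmax : ∀ i j, IsTight Adj w γ i j → x i j = 0 → y i - γ i ≤ δ)
    (hi : IsDeficient Adj w σ y γ δ i) :
    σ (σ i) ≠ i ∧ IsDeficient Adj w σ y γ δ (σ (σ i)) := by
  obtain ⟨hdef, j, hij, hj⟩ := hi
  obtain ⟨hedge, hflip⟩ := hy.adj_and_sub_le_sub hγ (i := i) (by linarith)
  have hpos : 0 < γ (σ i) := by linarith [hy.nonneg (σ i)]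
  obtain ⟨k, hki, hk⟩ := hγ.exists_tight i (σ i) j hedge hpos hij hj
  have hk' := hk.symm hadj hw
  have hsupp : x (σ i) k ≠ 0 := fun hzero => by
    have hlt := hy.lt_add _ _ hk.1 hzero
    have hle := hmax _ _ hk' (by rw [hx, hzero])
    linarith [hk.2]
  rw [hy.eq_arcPoint _ _ hk.1] at hsupp
  have hσ : σ (σ i) = k := (apply_eq_or_apply_eq_of_arcPoint_ne_zero hsupp).resolve_right
    fun h => hki (σ.injective h)
  subst hσ
  have hle := hy.le_add _ _ hk.1
  exact ⟨hki, by linarith [hk.2], σ i, hk', fun h => hki (σ.injective h).symm⟩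

theorem not_isDeficient [Fintype V] (hadj : ∀ i j, Adj i j → Adj j i) (hw : ∀ i j, w i j = w j i)
    (hx : ∀ i j, x i j = x j i) {ε : ℝ} (hε : 0 < ε) (hgap : HasGap Adj w x ε)
    (hy : IsStrictDual Adj w x σ y) (hγ : IsPropagatingCover Adj w γ) {δ : ℝ} (hδ : 0 < δ)
    (hmax : ∀ i j, IsTight Adj w γ i j → x i j = 0 → y i - γ i ≤ δ) (i : V) :
    ¬IsDeficient Adj w σ y γ δ i := by
  intro hi
  have hwalk : ∀ k, IsDeficient Adj w σ y γ δ k → _ := fun k hk =>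
    hk.apply_apply hadj hw hx hy hγ hδ hmax
  have hreverse : ∀ k, IsDeficient Adj w σ y γ δ k →
      Adj k (σ k) ∧ y k - γ k ≤ γ (σ k) - y (σ k) := fun k hk =>
    hy.adj_and_sub_le_sub hγ (by linarith [hk.1])
  obtain ⟨c, hc, hc_two⟩ := exists_isBalanced_eq_two (fun k hk => (hwalk k hk).2)
    fun k hk hk' => by linarith [(hreverse k hk).2, hk.1, hk'.1]
  have hc_one := hgap.isBalanced_eq_one hadj hw hε hy.eq_arcPoint hc (hreverse i hi).1
    (hwalk i hi).1
  linarith [hc_two i hi]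

end AlternatingWalk

theorem IsPropagatingCover.not_isTight [Fintype V] [DecidableRel Adj]
    (hadj : ∀ i j, Adj i j → Adj j i) (hirr : ∀ i, ¬Adj i i) (hw : ∀ i j, w i j = w j i)
    (hx : LPFeasible Adj x) {ε : ℝ} (hε : 0 < ε) (hgap : HasGap Adj w x ε)
    (hγ : IsPropagatingCover Adj w γ) (hzero : x i j = 0) :
    ¬IsTight Adj w γ i j := by
  classical
  intro hij
  obtain ⟨σ, y, hy⟩ := hgap.exists_isStrictDual hadj hirr hw hx hε
  let T : Finset V := {k | ∃ l, IsTight Adj w γ k l ∧ x k l = 0}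
  have hmem : ∀ {k}, k ∈ T ↔ ∃ l, IsTight Adj w γ k l ∧ x k l = 0 := by simp [T]
  have hiT : i ∈ T := hmem.2 ⟨j, hij, hzero⟩
  have hjT : j ∈ T := hmem.2 ⟨i, hij.symm hadj hw, by rw [hx.1, hzero]⟩
  obtain ⟨a, haT, hmax⟩ := T.exists_max_image (fun k => y k - γ k) ⟨i, hiT⟩
  have hδ : 0 < y a - γ a := by
    linarith [hmax i hiT, hmax j hjT, hy.lt_add i j hij.1 hzero, hij.2]
  obtain ⟨b, hab, hab_zero⟩ := hmem.1 haT
  have hb : b ≠ σ a := by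
    rintro rfl
    exact apply_ne_zero_of_eq_arcPoint hy.eq_arcPoint hab.1 hab_zero
  exact not_isDeficient hadj hw hx.1 hε hgap hy hγ hδ
    (fun k l hkl hkl_zero => hmax k (hmem.2 ⟨l, hkl, hkl_zero⟩)) a ⟨le_rfl, b, hab, hb⟩

end PropagatingCover

section FixedPoint

theorem exists_mem_eq_fold_max {ι β : Type*} [LinearOrder β] {s : Finset ι} {f : ι → β} {b : β}
    (h : b < s.fold max b f) : ∃ k ∈ s, f k = s.fold max b f := by
  obtain hle | ⟨k, hk, hle⟩ := (le_fold_max _).1 (le_refl (s.fold max b f))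
  · exact absurd h hle.not_gt
  · exact ⟨k, hk, ((le_fold_max _).2 (Or.inr ⟨k, hk, le_rfl⟩)).antisymm hle⟩

theorem offer_of_not_dotted {V : Type*} {w α : V → V → ℝ} (hw : ∀ i j, w i j = w j i) {i j : V}
    (h : w i j - α i j - α j i < 0) :
    offer w α j i = max (w i j - α j i) 0 := by
  rw [offer, hw j i, max_eq_right (a := w i j - α j i - α i j) (by linarith), mul_zero, sub_zero]

variable {V : Type*} [Fintype V] [DecidableEq V] {Adj : V → V → Prop} [DecidableRel Adj]
  {w α : V → V → ℝ} {κ : ℝ} {i j k : V}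

theorem bestAlt_nonneg (Adj : V → V → Prop) [DecidableRel Adj] (w α : V → V → ℝ) (i j : V) :
    0 ≤ bestAlt Adj w α i j :=
  (le_fold_max _).2 (Or.inl le_rfl)

theorem offer_le_bestAlt (h : Adj i k) (hne : k ≠ j) :
    offer w α k i ≤ bestAlt Adj w α i j :=
  (le_fold_max _).2 (Or.inr ⟨k, by simp [h, hne], le_rfl⟩)

theorem exists_offer_eq_bestAlt (h : 0 < bestAlt Adj w α i j) :
    ∃ k, Adj i k ∧ k ≠ j ∧ offer w α k i = bestAlt Adj w α i j := by
  obtain ⟨k, hk, heq⟩ := exists_mem_eq_fold_max h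
  obtain ⟨-, hik, hkj⟩ := mem_filter.1 hk
  exact ⟨k, hik, hkj, heq⟩

theorem earn_eq_max (h : Adj i j) :
    earn Adj w α i = max (offer w α j i) (bestAlt Adj w α i j) := by
  have hinsert : (univ.filter fun k => Adj i k) =
      insert j (univ.filter fun k => Adj i k ∧ k ≠ j) := by
    ext k
    by_cases hk : k = j <;> simp [hk, h]
  rw [earn, hinsert, fold_insert (by simp), bestAlt]

/-- The messages solve `α_{i→j} = max_{k∈∂i∖{j}} m_{k→i}`; for any nonzero damping factor these
are the fixed points of the natural dynamics. -/
def IsUndampedFixedPoint (Adj : V → V → Prop) [DecidableRel Adj] (w α : V → V → ℝ) : Prop :=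
  ∀ i j, Adj i j → bestAlt Adj w α i j = α i j

theorem IsFixedPoint.isUndampedFixedPoint (hκ : κ ≠ 0) (h : IsFixedPoint Adj w κ α) :
    IsUndampedFixedPoint Adj w α := by
  intro i j hij
  have hstep := h i j hij
  rw [step] at hstep
  exact mul_left_cancel₀ hκ (by linarith)

namespace IsUndampedFixedPoint

theorem nonneg (hα : IsUndampedFixedPoint Adj w α) (h : Adj i j) : 0 ≤ α i j :=
  hα i j h ▸ bestAlt_nonneg Adj w α i j

theorem offer_of_dotted (hw : ∀ i j, w i j = w j i) (hα : IsUndampedFixedPoint Adj w α)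
    (h : Adj i j) (hdot : 0 ≤ w i j - α i j - α j i) :
    offer w α j i = α i j + (w i j - α i j - α j i) / 2 := by
  rw [offer, hw j i, max_eq_left (by linarith [hα.nonneg h]), max_eq_left (by linarith)]
  ring

theorem earn_eq (hw : ∀ i j, w i j = w j i) (hα : IsUndampedFixedPoint Adj w α) (h : Adj i j) :
    earn Adj w α i = α i j + max (w i j - α i j - α j i) 0 / 2 := by
  rw [earn_eq_max h, hα i j h]
  obtain hdot | hnot := le_or_gt 0 (w i j - α i j - α j i)
  · rw [hα.offer_of_dotted hw h hdot, max_eq_left hdot, max_eq_left (by linarith)]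
  · have hle : max (w i j - α j i) 0 ≤ α i j := max_le (by linarith) (hα.nonneg h)
    rw [offer_of_not_dotted hw hnot, max_eq_right hle, max_eq_right hnot.le, zero_div, add_zero]

theorem earn_add_earn (hadj : ∀ i j, Adj i j → Adj j i) (hw : ∀ i j, w i j = w j i)
    (hα : IsUndampedFixedPoint Adj w α) (h : Adj i j) :
    earn Adj w α i + earn Adj w α j = max (w i j) (α i j + α j i) := by
  rw [hα.earn_eq hw h, hα.earn_eq hw (hadj i j h), hw j i, sub_right_comm (w i j) (α j i)]
  obtain hdot | hnot := le_or_gt 0 (w i j - α i j - α j i)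
  · rw [max_eq_left hdot, max_eq_left (by linarith)]
    ring
  · rw [max_eq_right hnot.le, max_eq_right (by linarith)]
    ring

theorem isTight_earn_iff (hadj : ∀ i j, Adj i j → Adj j i) (hw : ∀ i j, w i j = w j i)
    (hα : IsUndampedFixedPoint Adj w α) (h : Adj i j) :
    IsTight Adj w (earn Adj w α) i j ↔ 0 ≤ w i j - α i j - α j i := by
  rw [IsTight, and_iff_right h, hα.earn_add_earn hadj hw h, max_eq_left_iff, sub_sub, sub_nonneg]

theorem isTight_earn_of_offer_eq (hadj : ∀ i j, Adj i j → Adj j i) (hw : ∀ i j, w i j = w j i)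
    (hα : IsUndampedFixedPoint Adj w α) (h : Adj i j) (hpos : 0 < earn Adj w α i)
    (hoffer : offer w α j i = earn Adj w α i) : IsTight Adj w (earn Adj w α) i j := by
  rw [hα.isTight_earn_iff hadj hw h]
  by_contra! hnot
  have hearn : earn Adj w α i = α i j := by
    rw [hα.earn_eq hw h, max_eq_right hnot.le, zero_div, add_zero]
  have hlt : max (w i j - α j i) 0 < α i j := max_lt (by linarith) (hearn ▸ hpos)
  rw [offer_of_not_dotted hw hnot, hearn] at hoffer
  exact hlt.ne hoffer

theorem earn_le_of_isTight (hadj : ∀ i j, Adj i j → Adj j i) (hw : ∀ i j, w i j = w j i)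
    (hα : IsUndampedFixedPoint Adj w α) (hij : Adj i j)
    (hik : IsTight Adj w (earn Adj w α) i k) (hkj : k ≠ j) : earn Adj w α i ≤ α i j := by
  have hdot := (hα.isTight_earn_iff hadj hw hik.1).1 hik
  calc earn Adj w α i = offer w α k i := by
        rw [hα.earn_eq hw hik.1, max_eq_left hdot, hα.offer_of_dotted hw hik.1 hdot]
    _ ≤ bestAlt Adj w α i j := offer_le_bestAlt hik.1 hkj
    _ = α i j := hα i j hij

theorem isPropagatingCover_earn (hadj : ∀ i j, Adj i j → Adj j i) (hw : ∀ i j, w i j = w j i)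
    (hα : IsUndampedFixedPoint Adj w α) : IsPropagatingCover Adj w (earn Adj w α) where
  nonneg _ := (le_fold_max _).2 (Or.inl le_rfl)
  le_add _ _ h := (hα.earn_add_earn hadj hw h).symm ▸ le_max_left _ _
  exists_tight i j k hij hpos hik hkj := by
    have hle := hα.earn_le_of_isTight hadj hw hij hik hkj
    have hearn : bestAlt Adj w α j i = earn Adj w α j := by
      have hi := hα.earn_eq hw hij
      have hj := hα.earn_eq hw (hadj i j hij)
      rw [hw j i, sub_right_comm] at hj
      rw [hα j i (hadj i j hij)]
      linarith [le_max_right (w i j - α i j - α j i) 0]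
    obtain ⟨l, hjl, hli, hoffer⟩ := exists_offer_eq_bestAlt (hearn ▸ hpos)
    exact ⟨l, hli, hα.isTight_earn_of_offer_eq hadj hw hjl hpos (hoffer.trans hearn)⟩

end IsUndampedFixedPoint

end FixedPoint

theorem stmt14_general {V : Type*} [Fintype V] [DecidableEq V] (Adj : V → V → Prop)
    [DecidableRel Adj] (w : V → V → ℝ) (hadj : ∀ i j, Adj i j → Adj j i) (hirr : ∀ i, ¬Adj i i)
    (hw : ∀ i j, w i j = w j i) {κ : ℝ} (hκ : κ ≠ 0) (xstar : V → V → ℝ)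
    (hfeas : LPFeasible Adj xstar) {ε : ℝ} (hε : 0 < ε) (hgap : HasGap Adj w xstar ε)
    (α : V → V → ℝ) (hfp : IsFixedPoint Adj w κ α) (i j : V) (hij : Adj i j)
    (hzero : xstar i j = 0) : w i j - α i j - α j i < 0 := by
  have hα := hfp.isUndampedFixedPoint hκ
  have hcover := hα.isPropagatingCover_earn hadj hw
  rw [← not_le, ← hα.isTight_earn_iff hadj hw hij]
  exact hcover.not_isTight hadj hirr hw hfeas hε hgap hzero

/-- If the LP relaxation is pointed (unique half-integral optimum `x*` with an `ε` weight
gap over all other half-integral feasible points), then at any fixed point of the natural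
dynamics no non-solid edge (`x*_e = 0`) is dotted: `w_{ij} − α_{i→j} − α_{j→i} < 0`. -/
theorem stmt14 {V : Type*} [Fintype V] [DecidableEq V]
    (Adj : V → V → Prop) [DecidableRel Adj] (w : V → V → ℝ)
    (hG : GoodGraph Adj w) (κ : ℝ) (hκ : κ ∈ Set.Ioo (0 : ℝ) 1)
    (xstar : V → V → ℝ) (hfeas : LPFeasible Adj xstar)
    (hhalf : ∀ i j, Adj i j → xstar i j = 0 ∨ xstar i j = 1 / 2 ∨ xstar i j = 1)
    (ε : ℝ) (hε : 0 < ε)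
    (hopt : ∀ x, LPFeasible Adj x → LPobj Adj w x ≤ LPobj Adj w xstar)
    (hgap : ∀ x, LPFeasible Adj x →
      (∀ i j, Adj i j → x i j = 0 ∨ x i j = 1 / 2 ∨ x i j = 1) →
      (∃ i j, Adj i j ∧ x i j ≠ xstar i j) →
      LPobj Adj w x + ε ≤ LPobj Adj w xstar)
    (α : V → V → ℝ) (hnn : ∀ i j, Adj i j → 0 ≤ α i j)
    (hfp : IsFixedPoint Adj w κ α) :
    ∀ i j, Adj i j → xstar i j = 0 → w i j - α i j - α j i < 0 := by
  exact stmt14_general Adj w hG.1 hG.2.1 hG.2.2.1 hκ.1.ne' xstar hfeas hε hgap α hfp
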